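/- arXiv:1210.4340 — 4 statements merged into one kernel-verified Lean document; each statement's English description precedes it below -/
import Mathlib

section
/- Let H ⊆ ℝ be a set such that: (1) x, y ∈ H implies x + y ∈ H; (2) there exists x ∈ H with x > 0; (3) there exists x ∈ H with x < 0. Then either H is a cyclic subgroup of (ℝ, +) (i.e. H = {n·a : n ∈ ℤ} for some a ∈ ℝ), or H is dense in ℝ. -/
/-!
If `H` has arbitrarily small nonzero elements, say `g > 0`, then stepping by `g` from a very
negative element of `H` reaches every interval longer than `g`; if `g < 0`, one steps downwards
instead. Otherwise the nonzero elements of `H` are bounded away from `0`, and the subtractive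
Euclidean algorithm, which replaces one of the elements `p > 0 > q` by `p + q`, stays in `H` and
must reach `p + q = 0`. Tracing it backwards puts the original `-p` and `-q` into `H`, so `H` is a
subgroup with `0` isolated, hence cyclic.
-/

open Set

theorem add_nsmul_mem {M S : Type*} [AddMonoid M] [SetLike S M] [AddMemClass S M]
    {H : S} {x g : M} (hx : x ∈ H) (hg : g ∈ H) (n : ℕ) : x + n • g ∈ H := by
  induction n with
  | zero => simpa using hx
  | succ n ih => simpa only [succ_nsmul, add_assoc] using add_mem ih hg

section Archimedean

variable {G : Type*} [AddCommGroup G] [LinearOrder G] [IsOrderedAddMonoid G] [Archimedean G]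
  {H : AddSubsemigroup G}

theorem exists_mem_lt_of_exists_mem_neg (hneg : ∃ x ∈ H, x < 0) (a : G) : ∃ x ∈ H, x < a := by
  obtain ⟨y, hyH, hy⟩ := hneg
  obtain ⟨n, hn⟩ := Archimedean.arch (-a) (neg_pos.mpr hy)
  have hny : n • y ≤ a := by simpa using hn
  exact ⟨y + n • y, add_nsmul_mem hyH hyH n, (add_lt_of_neg_left _ hy).trans_le hny⟩

theorem exists_mem_Ioo_of_pos_mem (hneg : ∃ x ∈ H, x < 0) {g a b : G} (hgH : g ∈ H)
    (hg : 0 < g) (hgab : g < b - a) : ∃ x ∈ H, x ∈ Ioo a b := by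
  obtain ⟨x, hxH, hxa⟩ := exists_mem_lt_of_exists_mem_neg hneg a
  obtain ⟨k, hak, hka⟩ := (existsUnique_add_zsmul_mem_Ioc hg x a).exists
  have hk : 0 ≤ k := by
    by_contra! hk
    have hkg : k • g < 0 := by simpa using zsmul_left_strictMono hg hk
    exact (hak.trans (add_lt_of_neg_right x hkg)).not_gt hxa
  lift k to ℕ using hk
  rw [natCast_zsmul] at hak hka
  have hagb : a + g < b := lt_sub_iff_add_lt'.mp hgab
  exact ⟨x + k • g, add_nsmul_mem hxH hgH k, hak, hka.trans_lt hagb⟩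

theorem exists_mem_Ioo_of_neg_mem (hpos : ∃ x ∈ H, 0 < x) {g a b : G} (hgH : g ∈ H)
    (hg : g < 0) (hgab : -g < b - a) : ∃ x ∈ H, x ∈ Ioo a b := by
  let negH : AddSubsemigroup G := H.comap (negAddMonoidHom : G →+ G)
  have mem_negH {x : G} : x ∈ negH ↔ -x ∈ H := Iff.rfl
  obtain ⟨p, hpH, hp⟩ := hpos
  obtain ⟨x, hxH, hx⟩ : ∃ x ∈ negH, x ∈ Ioo (-b) (-a) :=
    exists_mem_Ioo_of_pos_mem ⟨-p, by simpa [mem_negH] using hpH, neg_neg_of_pos hp⟩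
      (g := -g) (by simpa [mem_negH] using hgH) (neg_pos.mpr hg) (by rwa [neg_sub_neg])
  exact ⟨-x, hxH, lt_neg_of_lt_neg hx.2, neg_lt_of_neg_lt hx.1⟩

theorem dense_of_forall_exists_abs_lt [TopologicalSpace G] [OrderTopology G]
    (hpos : ∃ x ∈ H, 0 < x) (hneg : ∃ x ∈ H, x < 0)
    (hsmall : ∀ ε > 0, ∃ g ∈ H, g ≠ 0 ∧ |g| < ε) : Dense (H : Set G) := by
  have : Nontrivial G := hpos.elim fun x hx => ⟨x, 0, hx.2.ne'⟩
  refine dense_of_exists_between fun a b hab => ?_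
  obtain ⟨g, hgH, hg, hgab⟩ := hsmall (b - a) (sub_pos.mpr hab)
  rcases hg.lt_or_gt with hg | hg
  · exact exists_mem_Ioo_of_neg_mem hpos hgH hg ((neg_le_abs g).trans_lt hgab)
  · exact exists_mem_Ioo_of_pos_mem hneg hgH hg ((le_abs_self g).trans_lt hgab)

theorem neg_mem_of_pos_of_neg_of_isolated_zero {ε p q : G} (hε : 0 < ε)
    (hisol : ∀ h ∈ H, |h| < ε → h = 0) (hpH : p ∈ H) (hp : 0 < p) (hqH : q ∈ H) (hq : q < 0) :
    -p ∈ H ∧ -q ∈ H := by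
  obtain ⟨n, hn⟩ := Archimedean.arch (p - q) hε
  -- Each step of the Euclidean algorithm shrinks the gap `p - q` by at least `ε`.
  induction n generalizing p q with
  | zero => exact absurd (hq.trans hp) (sub_nonpos.mp (by simpa using hn)).not_gt
  | succ n ih =>
    have hεp : ε ≤ p := by
      by_contra! h
      exact hp.ne' (hisol p hpH (by rwa [abs_of_pos hp]))
    have hεq : ε ≤ -q := by
      by_contra! h
      exact hq.ne (hisol q hqH (by rwa [abs_of_neg hq]))
    have hsum : p + q ∈ H := add_mem hpH hqH
    rw [succ_nsmul] at hn
    have hgap_neg : p - (p + q) ≤ n • ε := by grind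
    have hgap_pos : p + q - q ≤ n • ε := by grind
    rcases lt_trichotomy (p + q) 0 with h | h | h
    · obtain ⟨hnp, hns⟩ := ih hpH hp hsum h hgap_neg
      exact ⟨hnp, by simpa using add_mem hns hpH⟩
    · exact ⟨by rwa [neg_eq_of_add_eq_zero_right h], by rwa [neg_eq_of_add_eq_zero_left h]⟩
    · obtain ⟨hns, hnq⟩ := ih hsum h hqH hq hgap_pos
      exact ⟨by simpa using add_mem hqH hns, hnq⟩

theorem exists_eq_zmultiples_of_isolated_zero (hpos : ∃ x ∈ H, 0 < x) (hneg : ∃ x ∈ H, x < 0)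
    {ε : G} (hε : 0 < ε) (hisol : ∀ h ∈ H, |h| < ε → h = 0) :
    ∃ a : G, (H : Set G) = AddSubgroup.zmultiples a := by
  obtain ⟨p, hpH, hp⟩ := hpos
  obtain ⟨q, hqH, hq⟩ := hneg
  have neg_mem {x : G} (hx : x ∈ H) : -x ∈ H := by
    rcases lt_trichotomy x 0 with h | rfl | h
    · exact (neg_mem_of_pos_of_neg_of_isolated_zero hε hisol hpH hp hx h).2
    · simpa using hx
    · exact (neg_mem_of_pos_of_neg_of_isolated_zero hε hisol hx h hqH hq).1
  let K : AddSubgroup G :=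
    { H with
      zero_mem' := by simpa using add_mem hpH (neg_mem hpH)
      neg_mem' := neg_mem }
  have hdisj : Disjoint (K : Set G) (Ioo 0 ε) := disjoint_left.mpr fun x hx hxε =>
    hxε.1.ne' (hisol x hx (by rw [abs_of_pos hxε.1]; exact hxε.2))
  obtain ⟨a, ha⟩ := AddSubgroup.cyclic_of_isolated_zero hε hdisj
  rw [← AddSubgroup.zmultiples_eq_closure] at ha
  exact ⟨a, congrArg (fun L : AddSubgroup G => (L : Set G)) ha⟩

variable (H) in
theorem stmt_2_general [TopologicalSpace G] [OrderTopology G]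
    (hpos : ∃ x ∈ H, 0 < x) (hneg : ∃ x ∈ H, x < 0) :
    (∃ a : G, (H : Set G) = AddSubgroup.zmultiples a) ∨ Dense (H : Set G) := by
  by_cases hsmall : ∀ ε > 0, ∃ g ∈ H, g ≠ 0 ∧ |g| < ε
  · exact .inr (dense_of_forall_exists_abs_lt hpos hneg hsmall)
  · push Not at hsmall
    obtain ⟨ε, hε, hbound⟩ := hsmall
    refine .inl (exists_eq_zmultiples_of_isolated_zero hpos hneg hε fun h hh hlt => ?_)
    exact of_not_not fun h0 => (hbound h hh h0).not_gt hlt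

end Archimedean

theorem stmt_2 (H : Set ℝ)
    (hadd : ∀ x ∈ H, ∀ y ∈ H, x + y ∈ H)
    (hpos : ∃ x ∈ H, 0 < x)
    (hneg : ∃ x ∈ H, x < 0) :
    (∃ a : ℝ, H = {x : ℝ | ∃ m : ℤ, x = m * a}) ∨ Dense H := by
  simpa [Set.ext_iff, AddSubgroup.mem_zmultiples_iff, eq_comm] using
    stmt_2_general ⟨H, fun hx hy => hadd _ hx _ hy⟩ hpos hneg
end

section
/- Let ℓ₁, ℓ₂, ℓ₃ : ℝⁿ → ℝ be affine functions, ℓ_i(x) = ⟨x, a_i⟩ + c_i with a_i ∈ ℝⁿ, c_i ∈ ℝ, and assume ℓ₁ and ℓ₂ are not parallel, i.e. a₁ ≠ a₂. Then the points p_i = (a_i, c_i) ∈ ℝ^{n+1} (i = 1, 2, 3) are collinear (there exists λ ∈ ℝ with p₃ = λ·p₁ + (1−λ)·p₂) if and only if for every x₀ ∈ ℝⁿ, ℓ₁(x₀) = ℓ₂(x₀) implies ℓ₃(x₀) = ℓ₁(x₀). -/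
open scoped RealInnerProductSpace

/-!
Let `fᵢ` be the affine function of the point `(aᵢ, cᵢ)`. It depends linearly and injectively on the
point, so the three points are collinear iff `f₃ - f₂` is a multiple of `f₁ - f₂`. The latter is
nonconstant, and a nonconstant affine function `g` has points `p`, `q` with `g p = 0`, `g q = 1`:
an affine map `h` that vanishes on the zeros of `g` vanishes at `x - g x • (q - p)`, that is,
`h x = g x • h q`.
-/

open scoped Affine

theorem exists_forall_eq_smul_of_forall_eq_zero {K V P W : Type*} [DivisionRing K]
    [AddCommGroup V] [Module K V] [AddTorsor V P] [AddCommGroup W] [Module K W]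
    {g : P →ᵃ[K] K} {h : P →ᵃ[K] W} (hg : g.linear ≠ 0) (hgh : ∀ x, g x = 0 → h x = 0) :
    ∃ w : W, ∀ x, h x = g x • w := by
  have g_surjective : Function.Surjective g := g.linear_surjective_iff.mp (LinearMap.surjective hg)
  obtain ⟨p, hp⟩ := g_surjective 0
  obtain ⟨q, hq⟩ := g_surjective 1
  refine ⟨h q, fun x ↦ ?_⟩
  have g_eq_zero : g (-(g x • (q -ᵥ p)) +ᵥ x) = 0 := by
    simp [AffineMap.map_vadd, AffineMap.linearMap_vsub, hp, hq]
  have h_eq_zero := hgh _ g_eq_zero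
  simp only [AffineMap.map_vadd, map_neg, map_smul, AffineMap.linearMap_vsub, hgh p hp,
    vsub_eq_sub, sub_zero, vadd_eq_add] at h_eq_zero
  exact (neg_add_eq_zero.mp h_eq_zero).symm

theorem map_mem_line_iff {R V₁ P₁ V₂ P₂ : Type*} [Ring R]
    [AddCommGroup V₁] [Module R V₁] [AddTorsor V₁ P₁]
    [AddCommGroup V₂] [Module R V₂] [AddTorsor V₂ P₂]
    {f : P₁ →ᵃ[R] P₂} (hf : Function.Injective f) {p₁ p₂ p₃ : P₁} :
    f p₃ ∈ line[R, f p₁, f p₂] ↔ p₃ ∈ line[R, p₁, p₂] := by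
  rw [← AffineSubspace.mem_map_iff_mem_of_injective hf, AffineSubspace.map_span, Set.image_pair]

section AffineOfPoint

variable {R V W : Type*} [CommRing R] [AddCommGroup V] [Module R V] [AddCommGroup W] [Module R W]

/-- The affine function `x ↦ B x a + c` attached to the point `(a, c)` by a bilinear pairing `B`,
as a linear map in `(a, c)`. -/
def affineOfPoint (B : V →ₗ[R] W →ₗ[R] R) : W × R →ₗ[R] (V →ᵃ[R] R) :=
  (AffineMap.toConstProdLinearMap R).symm.toLinearMap ∘ₗ
    (LinearMap.snd R W R).prod (B.flip ∘ₗ LinearMap.fst R W R)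

@[simp]
theorem affineOfPoint_apply (B : V →ₗ[R] W →ₗ[R] R) (p : W × R) (x : V) :
    affineOfPoint B p x = B x p.1 + p.2 :=
  rfl

@[simp]
theorem affineOfPoint_linear (B : V →ₗ[R] W →ₗ[R] R) (p : W × R) :
    (affineOfPoint B p).linear = B.flip p.1 :=
  add_zero _

theorem flip_injective_of_separatingRight {B : V →ₗ[R] W →ₗ[R] R} (hB : B.SeparatingRight) :
    Function.Injective B.flip :=
  LinearMap.ker_eq_bot.mp (LinearMap.separatingRight_iff_flip_ker_eq_bot.mp hB)

theorem affineOfPoint_injective {B : V →ₗ[R] W →ₗ[R] R} (hB : B.SeparatingRight) :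
    Function.Injective (affineOfPoint B) := by
  intro p q hpq
  have fst_eq : p.1 = q.1 :=
    flip_injective_of_separatingRight hB (by simpa using congrArg AffineMap.linear hpq)
  have snd_eq : p.2 = q.2 := by simpa using DFunLike.congr_fun hpq 0
  exact Prod.ext fst_eq snd_eq

end AffineOfPoint

section Field

variable {K V W : Type*} [Field K] [AddCommGroup V] [Module K V] [AddCommGroup W] [Module K W]

theorem affineMap_mem_line_iff_forall_eq {P : Type*} [AddTorsor V P] {f₁ f₂ f₃ : P →ᵃ[K] K}
    (hf : f₁.linear ≠ f₂.linear) :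
    f₃ ∈ line[K, f₁, f₂] ↔ ∀ x, f₁ x = f₂ x → f₃ x = f₁ x := by
  rw [mem_affineSpan_pair_iff_exists_lineMap_rev_eq]
  constructor
  · rintro ⟨l, rfl⟩ x hx
    simp [AffineMap.lineMap_apply, hx]
  · intro h
    have linear_ne_zero : (f₁ - f₂).linear ≠ 0 := by
      rwa [AffineMap.sub_linear, sub_ne_zero]
    have zeros_subset : ∀ x, (f₁ - f₂) x = 0 → (f₃ - f₂) x = 0 := by
      intro x hx
      have hx : f₁ x = f₂ x := sub_eq_zero.mp hx
      exact sub_eq_zero.mpr ((h x hx).trans hx)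
    obtain ⟨l, hl⟩ := exists_forall_eq_smul_of_forall_eq_zero linear_ne_zero zeros_subset
    refine ⟨l, AffineMap.ext fun x ↦ ?_⟩
    have hlx : f₃ x - f₂ x = (f₁ x - f₂ x) * l := hl x
    simp only [AffineMap.lineMap_apply, vsub_eq_sub, vadd_eq_add, AffineMap.coe_add,
      AffineMap.coe_smul, AffineMap.coe_sub, Pi.add_apply, Pi.smul_apply, Pi.sub_apply, smul_eq_mul]
    linear_combination -hlx

theorem stmt_3_general {B : V →ₗ[K] W →ₗ[K] K} (hB : B.SeparatingRight) (a₁ a₂ a₃ : W)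
    (c₁ c₂ c₃ : K) (hpar : a₁ ≠ a₂) :
    (∃ l : K, a₃ = l • a₁ + (1 - l) • a₂ ∧ c₃ = l * c₁ + (1 - l) * c₂) ↔
      ∀ x, B x a₁ + c₁ = B x a₂ + c₂ → B x a₃ + c₃ = B x a₁ + c₁ := by
  have linear_ne : (affineOfPoint B (a₁, c₁)).linear ≠ (affineOfPoint B (a₂, c₂)).linear := by
    simpa only [affineOfPoint_linear] using (flip_injective_of_separatingRight hB).ne hpar
  calc (∃ l : K, a₃ = l • a₁ + (1 - l) • a₂ ∧ c₃ = l * c₁ + (1 - l) * c₂)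
    _ ↔ (a₃, c₃) ∈ line[K, (a₁, c₁), (a₂, c₂)] := by
      simp [mem_affineSpan_pair_iff_exists_lineMap_rev_eq, AffineMap.lineMap_apply_module,
        eq_comm, add_comm]
    _ ↔ affineOfPoint B (a₃, c₃) ∈ line[K, affineOfPoint B (a₁, c₁), affineOfPoint B (a₂, c₂)] :=
      (map_mem_line_iff (f := (affineOfPoint B).toAffineMap)
        (affineOfPoint_injective hB)).symm
    _ ↔ ∀ x, B x a₁ + c₁ = B x a₂ + c₂ → B x a₃ + c₃ = B x a₁ + c₁ :=
      affineMap_mem_line_iff_forall_eq linear_ne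

end Field

theorem stmt_3 {n : ℕ} (a₁ a₂ a₃ : EuclideanSpace ℝ (Fin n)) (c₁ c₂ c₃ : ℝ)
    (hpar : a₁ ≠ a₂) :
    (∃ l : ℝ, a₃ = l • a₁ + (1 - l) • a₂ ∧ c₃ = l * c₁ + (1 - l) * c₂) ↔
      (∀ x₀ : EuclideanSpace ℝ (Fin n),
        ⟪x₀, a₁⟫ + c₁ = ⟪x₀, a₂⟫ + c₂ → ⟪x₀, a₃⟫ + c₃ = ⟪x₀, a₁⟫ + c₁) :=
  stmt_3_general (B := innerₗ _) (fun a ha ↦ inner_self_eq_zero.mp (ha a)) a₁ a₂ a₃ c₁ c₂ c₃ hpar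
end

section
/- Let n ≥ 1 and suppose T : Cvx(ℝⁿ) → Cvx(ℝⁿ) satisfies: (1) for all φ, ψ ∈ Cvx(ℝⁿ), φ ≤ ψ pointwise if and only if Tφ ≤ Tψ pointwise; (2) Tφ = φ for every positively homogeneous φ ∈ Cvx(ℝⁿ). Then for every a ∈ ℝⁿ and every c < 0, there exists c' < 0 such that T(x ↦ ⟨x,a⟩ + c) is the function x ↦ ⟨x,a⟩ + c'. -/
open scoped RealInnerProductSpace

noncomputable section

/-- `Cvx(ℝⁿ)`: convex, lower semicontinuous functions `ℝⁿ → (-∞, ∞]`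
that are finite at at least one point. -/
def CvxFns (n : ℕ) : Set (EuclideanSpace ℝ (Fin n) → EReal) :=
  {φ | (∀ x, φ x ≠ ⊥) ∧
    (∀ x y : EuclideanSpace ℝ (Fin n), ∀ l : ℝ, 0 ≤ l → l ≤ 1 →
      φ (l • x + (1 - l) • y) ≤ (l : EReal) * φ x + ((1 - l : ℝ) : EReal) * φ y) ∧
    LowerSemicontinuous φ ∧ (∃ x, φ x ≠ ⊤)}

/-- `φ` is positively homogeneous: `φ(λx) = λ·φ(x)` for all `λ > 0`. -/
def PosHomog {n : ℕ} (φ : EuclideanSpace ℝ (Fin n) → EReal) : Prop :=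
  ∀ l : ℝ, 0 < l → ∀ x, φ (l • x) = (l : EReal) * φ x

/-- The affine function `x ↦ ⟨x, a⟩ + c`, viewed as an element of `Cvx(ℝⁿ)`. -/
def affineFn {n : ℕ} (a : EuclideanSpace ℝ (Fin n)) (c : ℝ) :
    EuclideanSpace ℝ (Fin n) → EReal :=
  fun x => ((⟪x, a⟫ + c : ℝ) : EReal)

/-!
A convex function on a whole vector space that is bounded above is constant. Applied to `g - f`,
this shows that a convex `g` lying below an affine `f` is a translate `f + c'`. Since `T` is
monotone and fixes linear functions, `T (f + c)` lies below `T f = f` for `f` linear and `c < 0`,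
so it is such a translate with `c' ≤ 0`; and `c' ≠ 0` because `T` reflects the order.
-/

open Set

section Convexity

variable {𝕜 E : Type*} [Field 𝕜] [LinearOrder 𝕜] [IsStrictOrderedRing 𝕜]
  [AddCommGroup E] [Module 𝕜 E] {f g : E → 𝕜}

theorem eq_of_convexOn_of_bddAbove (hg : ConvexOn 𝕜 univ g)
    (hbdd : BddAbove (range g)) (x y : E) : g x = g y := by
  suffices hle : ∀ x y, g x ≤ g y from (hle x y).antisymm (hle y x)
  intro x y
  obtain ⟨M, hM⟩ := hbdd
  have hgM (z : E) : g z ≤ M := hM (mem_range_self z)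
  by_contra! hyx
  have hgap : 0 < M - g y := sub_pos.2 (hyx.trans_le (hgM x))
  -- Continue the segment from `y` through `x` to the point `z` with `x = t • z + (1 - t) • y`,
  -- where `t` is so small that `g z ≤ M` forces `g x - g y ≤ (g x - g y) / 2`.
  let t : 𝕜 := (g x - g y) / (2 * (M - g y))
  let z : E := y + t⁻¹ • (x - y)
  have ht_pos : 0 < t := div_pos (sub_pos.2 hyx) (by positivity)
  have ht_le : t ≤ 1 := (div_le_one (by positivity)).2 (by linarith [hgM x])
  have ht_mul : t * (M - g y) = (g x - g y) / 2 := by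
    simp only [t]
    field_simp
  have hx : t • z + (1 - t) • y = x := by
    simp only [z, smul_add, smul_inv_smul₀ ht_pos.ne', sub_smul, one_smul]
    abel
  have hconv : g x ≤ t * g z + (1 - t) * g y := by
    simpa only [hx, smul_eq_mul] using
      hg.2 (mem_univ z) (mem_univ y) ht_pos.le (sub_nonneg.2 ht_le) (add_sub_cancel t 1)
  have hz : t * g z ≤ t * M := mul_le_mul_of_nonneg_left (hgM z) ht_pos.le
  linarith

theorem exists_eq_add_const_of_convexOn_le_concaveOn (hg : ConvexOn 𝕜 univ g)
    (hf : ConcaveOn 𝕜 univ f) (hle : g ≤ f) : ∃ c, ∀ x, g x = f x + c := by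
  have hbdd : BddAbove (range (g - f)) :=
    ⟨0, forall_mem_range.2 fun x ↦ sub_nonpos.2 (hle x)⟩
  exact ⟨(g - f) 0, fun x ↦
    eq_add_of_sub_eq' (eq_of_convexOn_of_bddAbove (hg.sub hf) hbdd x 0)⟩

end Convexity

section ExtendedConvex

variable {E : Type*} [AddCommGroup E] [Module ℝ E]

/-- Convex functions with values in `(-∞, ∞]`. The inequality is written out because `ConvexOn`
requires scalar multiplication by reals on the codomain, which `EReal` does not carry. -/
structure ExtendedConvex (φ : E → EReal) : Prop where
  ne_bot (x : E) : φ x ≠ ⊥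
  map_combo_le (x y : E) (t : ℝ) : 0 ≤ t → t ≤ 1 →
    φ (t • x + (1 - t) • y) ≤ (t : EReal) * φ x + ((1 - t : ℝ) : EReal) * φ y

theorem ExtendedConvex.convexOn {g : E → ℝ} (hg : ExtendedConvex fun x ↦ (g x : EReal)) :
    ConvexOn ℝ univ g := by
  refine ⟨convex_univ, fun x _ y _ s t hs ht hst ↦ ?_⟩
  obtain rfl : t = 1 - s := eq_sub_of_add_eq' hst
  exact_mod_cast hg.map_combo_le x y s hs (sub_nonneg.1 ht)

theorem ExtendedConvex.exists_eq_add_const_of_le_concaveOn {φ : E → EReal}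
    (hφ : ExtendedConvex φ) {f : E → ℝ} (hf : ConcaveOn ℝ univ f) (hle : ∀ x, φ x ≤ f x) :
    ∃ c : ℝ, φ = fun x ↦ ((f x + c : ℝ) : EReal) := by
  lift φ to E → ℝ using
    fun x ↦ ⟨((hle x).trans_lt (EReal.coe_lt_top _)).ne, hφ.ne_bot x⟩
  obtain ⟨c, hc⟩ := exists_eq_add_const_of_convexOn_le_concaveOn hφ.convexOn hf
    fun x ↦ EReal.coe_le_coe_iff.1 (hle x)
  exact ⟨c, funext fun x ↦ congrArg _ (hc x)⟩

theorem stmt_4_general {𝓒 : Set (E → EReal)} {T : (E → EReal) → E → EReal}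
    (hconv : ∀ φ ∈ 𝓒, ExtendedConvex (T φ))
    (hord : ∀ φ ∈ 𝓒, ∀ ψ ∈ 𝓒, (∀ x, φ x ≤ ψ x) ↔ ∀ x, T φ x ≤ T ψ x)
    {f : E →ᵃ[ℝ] ℝ} (hf : (fun x ↦ (f x : EReal)) ∈ 𝓒)
    (hfix : T (fun x ↦ (f x : EReal)) = fun x ↦ (f x : EReal))
    {c : ℝ} (hc : c < 0) (hfc : (fun x ↦ ((f x + c : ℝ) : EReal)) ∈ 𝓒) :
    ∃ c' : ℝ, c' < 0 ∧
      T (fun x ↦ ((f x + c : ℝ) : EReal)) = fun x ↦ ((f x + c' : ℝ) : EReal) := by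
  have hle : ∀ x, T (fun x ↦ ((f x + c : ℝ) : EReal)) x ≤ f x := by
    have hT := (hord _ hfc _ hf).1 fun x ↦ EReal.coe_le_coe_iff.2 (by linarith)
    rwa [hfix] at hT
  have hconcave : ConcaveOn ℝ univ f := (concaveOn_id convex_univ).comp_affineMap f
  obtain ⟨c', hc'⟩ := (hconv _ hfc).exists_eq_add_const_of_le_concaveOn hconcave hle
  refine ⟨c', ?_, hc'⟩
  by_contra! hc'_nonneg
  have hT : ∀ x, T (fun x ↦ (f x : EReal)) x ≤ T (fun x ↦ ((f x + c : ℝ) : EReal)) x := by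
    rw [hfix, hc']
    exact fun x ↦ EReal.coe_le_coe_iff.2 (by linarith)
  have hfc_le : f 0 ≤ f 0 + c := EReal.coe_le_coe_iff.1 ((hord _ hf _ hfc).2 hT 0)
  linarith

end ExtendedConvex

section Cvx

variable {n : ℕ}

theorem extendedConvex_of_mem_cvxFns {φ : EuclideanSpace ℝ (Fin n) → EReal}
    (hφ : φ ∈ CvxFns n) : ExtendedConvex φ :=
  ⟨hφ.1, hφ.2.1⟩

theorem affineFn_mem_cvxFns (a : EuclideanSpace ℝ (Fin n)) (c : ℝ) : affineFn a c ∈ CvxFns n := by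
  refine ⟨fun x ↦ EReal.coe_ne_bot _, fun x y t _ _ ↦ ?_, ?_, 0, EReal.coe_ne_top _⟩
  · have haffine : ⟪t • x + (1 - t) • y, a⟫ + c = t * (⟪x, a⟫ + c) + (1 - t) * (⟪y, a⟫ + c) := by
      rw [inner_add_left, real_inner_smul_left, real_inner_smul_left]
      ring
    exact (congrArg Real.toEReal haffine).le
  · exact (continuous_coe_real_ereal.comp (by fun_prop)).lowerSemicontinuous

theorem coe_inner_mem_cvxFns (a : EuclideanSpace ℝ (Fin n)) :
    (fun x ↦ ((⟪x, a⟫ : ℝ) : EReal)) ∈ CvxFns n := by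
  have hmem := affineFn_mem_cvxFns a 0
  unfold affineFn at hmem
  simpa only [add_zero] using hmem

theorem posHomog_coe_inner (a : EuclideanSpace ℝ (Fin n)) :
    PosHomog fun x ↦ ((⟪x, a⟫ : ℝ) : EReal) := by
  intro t _ x
  simp only [real_inner_smul_left, EReal.coe_mul]

end Cvx

theorem stmt_4 {n : ℕ} (hn : 1 ≤ n)
    (T : (EuclideanSpace ℝ (Fin n) → EReal) → (EuclideanSpace ℝ (Fin n) → EReal))
    (hmap : ∀ φ ∈ CvxFns n, T φ ∈ CvxFns n)
    (hord : ∀ φ ∈ CvxFns n, ∀ ψ ∈ CvxFns n,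
      ((∀ x, φ x ≤ ψ x) ↔ (∀ x, T φ x ≤ T ψ x)))
    (hhom : ∀ φ ∈ CvxFns n, PosHomog φ → T φ = φ) :
    ∀ a : EuclideanSpace ℝ (Fin n), ∀ c : ℝ, c < 0 →
      ∃ c' : ℝ, c' < 0 ∧ T (affineFn a c) = affineFn a c' := by
  intro a c hc
  exact stmt_4_general (f := ((innerₗ _).flip a).toAffineMap)
    (fun φ hφ ↦ extendedConvex_of_mem_cvxFns (hmap φ hφ)) hord (coe_inner_mem_cvxFns a)
    (hhom _ (coe_inner_mem_cvxFns a) (posHomog_coe_inner a)) hc (affineFn_mem_cvxFns a c)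
end
end

section
/- Let n ≥ 1, −1/n < α < 0 (so β = −1/α > n), κ = α/(1 + nα), let f ∈ C_α(ℝⁿ) be Lebesgue integrable with ∫f > 0, and let 0 < ε < 1. Then the α-sum G_α ⋆_α (ε ·_α f) is well defined and ∫_{ℝⁿ} (G_α ⋆_α (ε ·_α f))(x) dx ≥ [ (1−ε)^{1−κn/2}·(∫ G_α)^κ + ε·(∫ f)^κ ]^{1/κ} (note κ < 0). -/
open scoped RealInnerProductSpace Topology ENNReal
open MeasureTheory Filter

noncomputable section

/-- `f : ℝⁿ → [0,∞)` is `α`-concave: its support is convex and `f` satisfies the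
`α`-mean inequality on its support. -/
def AlphaConcave (n : ℕ) (α : ℝ) (f : EuclideanSpace ℝ (Fin n) → ℝ) : Prop :=
  Convex ℝ {x | f x ≠ 0} ∧
  ∀ x y : EuclideanSpace ℝ (Fin n), f x ≠ 0 → f y ≠ 0 → ∀ l : ℝ, 0 ≤ l → l ≤ 1 →
    (l * f x ^ α + (1 - l) * f y ^ α) ^ (1 / α) ≤ f (l • x + (1 - l) • y)

/-- `C_α(ℝⁿ)`: upper semicontinuous `α`-concave functions `f : ℝⁿ → [0,∞)`
with `f` not identically `0`. -/
def CAlpha (n : ℕ) (α : ℝ) : Set (EuclideanSpace ℝ (Fin n) → ℝ) :=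
  {f | (∀ x, 0 ≤ f x) ∧ UpperSemicontinuous f ∧ (∃ x, f x ≠ 0) ∧ AlphaConcave n α f}

/-- The convex base `base_α f = (1 - f^α)/α = β·(f^{-1/β} - 1)` (with `α = -1/β`),
taking the value `∞` where `f = 0`. -/
def convexBase {n : ℕ} (β : ℝ) (f : EuclideanSpace ℝ (Fin n) → ℝ) :
    EuclideanSpace ℝ (Fin n) → EReal :=
  fun x => if f x = 0 then ⊤ else ((β * (f x ^ (-1 / β) - 1) : ℝ) : EReal)

/-- The `α`-concave function with the given convex base: `f = (1 + φ/β)^{-β}`. -/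
def ofBase {n : ℕ} (β : ℝ) (φ : EuclideanSpace ℝ (Fin n) → EReal) :
    EuclideanSpace ℝ (Fin n) → ℝ :=
  fun x => if φ x = ⊤ then 0 else (1 + (φ x).toReal / β) ^ (-β)

/-- Inf-convolution: `(φ □ ψ)(x) = inf_{y+z=x} [φ(y) + ψ(z)]`. -/
def infConv {n : ℕ} (φ ψ : EuclideanSpace ℝ (Fin n) → EReal) :
    EuclideanSpace ℝ (Fin n) → EReal :=
  fun x => ⨅ y : EuclideanSpace ℝ (Fin n), φ y + ψ (x - y)

/-- The base of the `λ`-homothety: `x ↦ λ·φ(x/λ)`. -/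
def scaleBase {n : ℕ} (l : ℝ) (φ : EuclideanSpace ℝ (Fin n) → EReal) :
    EuclideanSpace ℝ (Fin n) → EReal :=
  fun x => (l : EReal) * φ (l⁻¹ • x)

/-- `base_α G_α`, i.e. the function `x ↦ |x|²/2`. -/
def gaussBase (n : ℕ) : EuclideanSpace ℝ (Fin n) → EReal :=
  fun x => ((‖x‖ ^ 2 / 2 : ℝ) : EReal)

/-- The Legendre transform `φ*(y) = sup_x (⟨x,y⟩ - φ(x))`. -/
def legendre {n : ℕ} (φ : EuclideanSpace ℝ (Fin n) → EReal) :
    EuclideanSpace ℝ (Fin n) → EReal :=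
  fun y => ⨆ x : EuclideanSpace ℝ (Fin n), (((⟪x, y⟫ : ℝ) : EReal) - φ x)

/-- The `α`-mean `[l·u^α + (1-l)·v^α]^{1/α}` with the conventions `0^α = +∞`,
`(+∞)^{1/α} = 0` (for `α < 0`). -/
def alphaMean (α l u v : ℝ) : ℝ :=
  if u = 0 ∨ v = 0 then 0 else (l * u ^ α + (1 - l) * v ^ α) ^ (1 / α)

/-!
By the one-dimensional Brunn-Minkowski inequality for level sets, a function `h` on the line with
`h (a x + b y) ≥ min (g x) (f y)`, where `g` and `f` have the same supremum, satisfies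
`∫ h ≥ a ∫ g + b ∫ f`. Rescaling `g` and `f` and Hölder's inequality for power means turn this into
the Borell-Brascamp-Lieb inequality on the line, and integrating one coordinate at a time gives it
in every dimension. The infimum defining the base of `G_α ⋆_α (ε ·_α f)` at `(1 - ε) x + ε y`
is at most `|(1 - ε) x|² / 2 + ε base_α f (y)`, which says that the `α`-sum dominates the
`α`-mean, with weights `1 - ε` and `ε`, of `G_α (√(1 - ε) x)` and `f y`; the dilation multiplies
the integral of `G_α` by `(1 - ε) ^ (-n / 2)`.
-/

open Set Module
open scoped Pointwise

section PowerMean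

/-- The power mean `(a uᵖ + b vᵖ)^{1/p}` on `[0, ∞]`. The weights need not add up to `1`. For
`p < 0` and positive weights the conventions of `ENNReal.rpow` make it vanish when `u = 0` or
`v = 0`. -/
def powerMean (a b p : ℝ) (u v : ℝ≥0∞) : ℝ≥0∞ :=
  (ENNReal.ofReal a * u ^ p + ENNReal.ofReal b * v ^ p) ^ (1 / p)

variable {a b p : ℝ} {u v : ℝ≥0∞}

lemma powerMean_comm (a b p : ℝ) (u v : ℝ≥0∞) : powerMean a b p u v = powerMean b a p v u := by
  rw [powerMean, powerMean, add_comm]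

lemma powerMean_zero_left (ha : 0 < a) (hp : p < 0) (b : ℝ) (v : ℝ≥0∞) :
    powerMean a b p 0 v = 0 := by
  rw [powerMean, ENNReal.zero_rpow_of_neg hp, ENNReal.mul_top (by simpa using ha), top_add,
    ENNReal.top_rpow_of_neg (one_div_neg.2 hp)]

lemma powerMean_zero_right (hb : 0 < b) (hp : p < 0) (a : ℝ) (u : ℝ≥0∞) :
    powerMean a b p u 0 = 0 := by
  rw [powerMean_comm, powerMean_zero_left hb hp]

lemma powerMean_mono (hp : p < 0) {u' v' : ℝ≥0∞} (hu : u ≤ u') (hv : v ≤ v') :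
    powerMean a b p u v ≤ powerMean a b p u' v' := by
  have rpow_anti {q : ℝ} (hq : q ≤ 0) {x y : ℝ≥0∞} (h : x ≤ y) : y ^ q ≤ x ^ q := by
    simpa [ENNReal.rpow_neg] using ENNReal.inv_le_inv.2 (ENNReal.rpow_le_rpow h (neg_nonneg.2 hq))
  refine rpow_anti (one_div_neg.2 hp).le ?_
  gcongr ENNReal.ofReal a * ?_ + ENNReal.ofReal b * ?_
  exacts [rpow_anti hp.le hu, rpow_anti hp.le hv]

lemma powerMean_mul (hp : p ≠ 0) {c : ℝ≥0∞} (hc0 : c ≠ 0) (hc : c ≠ ⊤) (u v : ℝ≥0∞) :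
    powerMean a b p (c * u) (c * v) = c * powerMean a b p u v := by
  have mul_rpow_const (x : ℝ≥0∞) (q : ℝ) : (c * x) ^ q = c ^ q * x ^ q := by
    simp [ENNReal.mul_rpow_eq_ite, hc0, hc]
  have hcp0 : c ^ p ≠ 0 := by simp [ENNReal.rpow_eq_zero_iff, hc0, hc]
  have hcp : c ^ p ≠ ⊤ := by simp [ENNReal.rpow_eq_top_iff, hc0, hc]
  calc powerMean a b p (c * u) (c * v)
      = (c ^ p * (ENNReal.ofReal a * u ^ p + ENNReal.ofReal b * v ^ p)) ^ (1 / p) := by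
        rw [powerMean, mul_rpow_const, mul_rpow_const]; ring_nf
    _ = c * powerMean a b p u v := by
        rw [ENNReal.mul_rpow_eq_ite, if_neg (by simp [hcp0, hcp]), ← ENNReal.rpow_mul,
          mul_one_div_cancel hp, ENNReal.rpow_one, powerMean]

lemma continuous_powerMean (a b p : ℝ) :
    Continuous fun w : ℝ≥0∞ × ℝ≥0∞ => powerMean a b p w.1 w.2 := by
  have continuous_weighted (c : ℝ) : Continuous fun u : ℝ≥0∞ => ENNReal.ofReal c * u ^ p :=
    (ENNReal.continuous_const_mul ENNReal.ofReal_ne_top).comp ENNReal.continuous_rpow_const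
  exact ENNReal.continuous_rpow_const.comp
    (((continuous_weighted a).comp continuous_fst).add
      ((continuous_weighted b).comp continuous_snd))

lemma powerMean_ofReal (ha : 0 < a) (hb : 0 < b) {x y : ℝ} (hx : 0 < x) (hy : 0 < y) :
    powerMean a b p (ENNReal.ofReal x) (ENNReal.ofReal y) =
      ENNReal.ofReal ((a * x ^ p + b * y ^ p) ^ (1 / p)) := by
  rw [powerMean, ENNReal.ofReal_rpow_of_pos hx, ENNReal.ofReal_rpow_of_pos hy,
    ← ENNReal.ofReal_mul ha.le, ← ENNReal.ofReal_mul hb.le,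
    ← ENNReal.ofReal_add (by positivity) (by positivity),
    ENNReal.ofReal_rpow_of_pos (by positivity)]

lemma exists_pos_eq_ofReal (hu : u ∈ Ioo 0 ⊤) : ∃ x : ℝ, 0 < x ∧ u = ENNReal.ofReal x :=
  ⟨u.toReal, ENNReal.toReal_pos hu.1.ne' hu.2.ne, (ENNReal.ofReal_toReal hu.2.ne).symm⟩

lemma powerMean_mem_Ioo (ha : 0 < a) (hb : 0 < b) (hu : u ∈ Ioo 0 ⊤) (hv : v ∈ Ioo 0 ⊤) :
    powerMean a b p u v ∈ Ioo 0 ⊤ := by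
  obtain ⟨x, hx, rfl⟩ := exists_pos_eq_ofReal hu
  obtain ⟨y, hy, rfl⟩ := exists_pos_eq_ofReal hv
  rw [powerMean_ofReal ha hb hx hy]
  exact ⟨ENNReal.ofReal_pos.2 (by positivity), ENNReal.ofReal_lt_top⟩

-- Hölder with exponent `1 / (1 + p)`, weights `a x, b y` and functions `uᵖ / x, vᵖ / y`.
lemma weighted_rpow_add_le_mul (ha : 0 < a) (hb : 0 < b) (hp1 : -1 < p) (hp : p < 0)
    {u v x y : ℝ} (hu : 0 < u) (hv : 0 < v) (hx : 0 < x) (hy : 0 < y) :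
    a * u ^ p + b * v ^ p ≤
      (a * x + b * y) ^ (-p) *
        (a * (u * x) ^ (p / (1 + p)) + b * (v * y) ^ (p / (1 + p))) ^ (1 + p) := by
  have hp1' : 0 < 1 + p := by linarith
  have weight_mul_rpow (c : ℝ) {s t : ℝ} (hs : 0 < s) (ht : 0 < t) :
      c * t * (s ^ p / t) ^ (1 + p)⁻¹ = c * (s * t) ^ (p / (1 + p)) := by
    have hexp : p / (1 + p) = 1 - (1 + p)⁻¹ := by field_simp; ring
    rw [Real.div_rpow (by positivity) ht.le, ← Real.rpow_mul hs.le, Real.mul_rpow hs.le ht.le,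
      ← div_eq_mul_inv p (1 + p)]
    nth_rewrite 3 [hexp]
    rw [Real.rpow_sub ht, Real.rpow_one]
    ring
  have holder := Real.inner_le_weight_mul_Lp_of_nonneg Finset.univ
    (one_le_inv_iff₀.2 ⟨hp1', by linarith⟩) ![a * x, b * y] ![u ^ p / x, v ^ p / y]
    (Fin.forall_fin_two.2 ⟨(mul_pos ha hx).le, (mul_pos hb hy).le⟩)
    (Fin.forall_fin_two.2 ⟨(div_pos (Real.rpow_pos_of_pos hu p) hx).le,
      (div_pos (Real.rpow_pos_of_pos hv p) hy).le⟩)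
  simp only [Fin.sum_univ_two, Matrix.cons_val_zero, Matrix.cons_val_one, inv_inv,
    weight_mul_rpow _ hu hx, weight_mul_rpow _ hv hy] at holder
  convert holder using 2
  · field_simp
  · field_simp
  · ring_nf

lemma weighted_rpow_mul_le (ha : 0 < a) (hb : 0 < b) (hp1 : -1 < p) (hp : p < 0)
    {u v x y : ℝ} (hu : 0 < u) (hv : 0 < v) (hx : 0 < x) (hy : 0 < y) :
    (a * (u * x) ^ (p / (1 + p)) + b * (v * y) ^ (p / (1 + p))) ^ (1 / (p / (1 + p))) ≤
      (a * u ^ p + b * v ^ p) ^ (1 / p) * (a * x + b * y) := by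
  set S := a * u ^ p + b * v ^ p
  set T := a * (u * x) ^ (p / (1 + p)) + b * (v * y) ^ (p / (1 + p))
  set W := a * x + b * y
  have hS : 0 < S := by positivity
  have hT : 0 < T := by positivity
  have hW : 0 < W := by positivity
  calc T ^ (1 / (p / (1 + p)))
      = (W ^ (-p) * T ^ (1 + p)) ^ (1 / p) * W := by
        rw [Real.mul_rpow (by positivity) (by positivity), ← Real.rpow_mul hW.le,
          ← Real.rpow_mul hT.le, show -p * (1 / p) = -1 by field_simp [hp.ne],
          show (1 + p) * (1 / p) = 1 / (p / (1 + p)) by field_simp, Real.rpow_neg_one]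
        field_simp
    _ ≤ S ^ (1 / p) * W := by
        gcongr ?_ * W
        exact Real.rpow_le_rpow_of_nonpos hS (weighted_rpow_add_le_mul ha hb hp1 hp hu hv hx hy)
          (one_div_neg.2 hp).le

lemma powerMean_mul_le (ha : 0 < a) (hb : 0 < b) (hp1 : -1 < p) (hp : p < 0)
    (hu : u ∈ Ioo 0 ⊤) (hv : v ∈ Ioo 0 ⊤) (x y : ℝ≥0∞) :
    powerMean a b (p / (1 + p)) (u * x) (v * y) ≤
      powerMean a b p u v * (ENNReal.ofReal a * x + ENNReal.ofReal b * y) := by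
  have hκ : p / (1 + p) < 0 := div_neg_of_neg_of_pos hp (by linarith)
  have hM := (powerMean_mem_Ioo (p := p) ha hb hu hv).1.ne'
  rcases eq_or_ne x 0 with rfl | hx0
  · simp [powerMean_zero_left ha hκ]
  rcases eq_or_ne y 0 with rfl | hy0
  · simp [powerMean_zero_right hb hκ]
  rcases eq_or_ne x ⊤ with rfl | hx
  · simp [ENNReal.mul_top, ha, hM]
  rcases eq_or_ne y ⊤ with rfl | hy
  · simp [ENNReal.mul_top, hb, hM]
  obtain ⟨u, hu_pos, rfl⟩ := exists_pos_eq_ofReal hu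
  obtain ⟨v, hv_pos, rfl⟩ := exists_pos_eq_ofReal hv
  obtain ⟨x, hx_pos, rfl⟩ := exists_pos_eq_ofReal ⟨pos_iff_ne_zero.2 hx0, hx.lt_top⟩
  obtain ⟨y, hy_pos, rfl⟩ := exists_pos_eq_ofReal ⟨pos_iff_ne_zero.2 hy0, hy.lt_top⟩
  rw [← ENNReal.ofReal_mul hu_pos.le, ← ENNReal.ofReal_mul hv_pos.le, ← ENNReal.ofReal_mul ha.le,
    ← ENNReal.ofReal_mul hb.le, ← ENNReal.ofReal_add (by positivity) (by positivity),
    powerMean_ofReal ha hb (mul_pos hu_pos hx_pos) (mul_pos hv_pos hy_pos),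
    powerMean_ofReal ha hb hu_pos hv_pos, ← ENNReal.ofReal_mul (by positivity)]
  exact ENNReal.ofReal_le_ofReal
    (weighted_rpow_mul_le ha hb hp1 hp hu_pos hv_pos hx_pos hy_pos)

end PowerMean

section Line

lemma volume_add_volume_le_volume_add_of_isCompact {K L : Set ℝ} (hK : IsCompact K)
    (hL : IsCompact L) (hK_ne : K.Nonempty) (hL_ne : L.Nonempty) :
    volume K + volume L ≤ volume (K + L) := by
  obtain ⟨k, hkK, hk_max⟩ := hK.exists_isGreatest hK_ne
  obtain ⟨l, hlL, hl_min⟩ := hL.exists_isLeast hL_ne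
  -- `K + l` and `k + L` only meet at `k + l`.
  have haedisjoint : AEDisjoint volume (K + {l}) ({k} + L) := by
    refine measure_mono_null (t := {k + l}) ?_ (measure_singleton _)
    rintro z ⟨hzK, hzL⟩
    rw [add_singleton] at hzK
    rw [singleton_add] at hzL
    obtain ⟨x, hx, rfl⟩ := hzK
    obtain ⟨y, hy, hxy⟩ := hzL
    have hxk : x ≤ k := hk_max hx
    have hly : l ≤ y := hl_min hy
    simp only [mem_singleton_iff] at hxy ⊢
    linarith
  calc volume K + volume L
      = volume (K + {l}) + volume ({k} + L) := by
        simp only [add_singleton, singleton_add, image_add_right, image_add_left,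
          measure_preimage_add, measure_preimage_add_right]
    _ = volume ((K + {l}) ∪ ({k} + L)) :=
        (measure_union₀ (isCompact_singleton.add hL).measurableSet.nullMeasurableSet
          haedisjoint).symm
    _ ≤ volume (K + L) := by
        gcongr
        exact union_subset (add_subset_add_left (singleton_subset_iff.2 hlL))
          (add_subset_add_right (singleton_subset_iff.2 hkK))

lemma volume_eq_iSup_nonempty_isCompact {A : Set ℝ} (hA : MeasurableSet A) (hA_ne : A.Nonempty) :
    volume A = ⨆ K : {K : Set ℝ // K ⊆ A ∧ IsCompact K ∧ K.Nonempty}, volume K.1 := by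
  refine le_antisymm ?_ (iSup_le fun K => measure_mono K.2.1)
  obtain ⟨x, hx⟩ := hA_ne
  rw [hA.measure_eq_iSup_isCompact]
  refine iSup₂_le fun K hKA => iSup_le fun hK => ?_
  exact (measure_mono (subset_insert x K)).trans
    (le_iSup_of_le ⟨insert x K, insert_subset hx hKA, hK.insert x, insert_nonempty x K⟩ le_rfl)

theorem volume_add_volume_le_volume_add {A B : Set ℝ} (hA : MeasurableSet A)
    (hB : MeasurableSet B) (hA_ne : A.Nonempty) (hB_ne : B.Nonempty) :
    volume A + volume B ≤ volume (A + B) := by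
  have nonempty_compacts {C : Set ℝ} (hC_ne : C.Nonempty) :
      Nonempty {K : Set ℝ // K ⊆ C ∧ IsCompact K ∧ K.Nonempty} :=
    hC_ne.elim fun x hx =>
      ⟨{x}, singleton_subset_iff.2 hx, isCompact_singleton, singleton_nonempty x⟩
  have := nonempty_compacts hA_ne
  have := nonempty_compacts hB_ne
  rw [volume_eq_iSup_nonempty_isCompact hA hA_ne, volume_eq_iSup_nonempty_isCompact hB hB_ne]
  refine ENNReal.iSup_add_iSup_le fun ⟨K, hKA, hK, hK_ne⟩ ⟨L, hLB, hL, hL_ne⟩ => ?_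
  exact (volume_add_volume_le_volume_add_of_isCompact hK hL hK_ne hL_ne).trans
    (measure_mono (add_subset_add hKA hLB))

lemma lintegral_eq_lintegral_meas_ofReal_lt {X : Type*} [MeasurableSpace X] (μ : Measure X)
    [SFinite μ] {f : X → ℝ≥0∞} (hf : Measurable f) :
    ∫⁻ x, f x ∂μ = ∫⁻ t in Ioi (0 : ℝ), μ {x | ENNReal.ofReal t < f x} := by
  have volume_section (c : ℝ≥0∞) :
      volume.restrict (Ioi 0) {t : ℝ | ENNReal.ofReal t < c} = c := by
    rw [Measure.restrict_apply (measurableSet_lt ENNReal.measurable_ofReal measurable_const)]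
    induction c with
    | top => simp
    | coe c =>
      have : {t : ℝ | ENNReal.ofReal t < c} ∩ Ioi 0 = Ioo 0 (c : ℝ) := by
        ext t
        simp only [mem_inter_iff, mem_ofPred_eq, mem_Ioi, mem_Ioo, and_comm (a := 0 < t),
          and_congr_left_iff]
        intro ht
        rw [ENNReal.ofReal_lt_iff_lt_toReal ht.le ENNReal.coe_ne_top, ENNReal.coe_toReal]
      simp [this]
  have hS : MeasurableSet {q : X × ℝ | ENNReal.ofReal q.2 < f q.1} :=
    measurableSet_lt (by fun_prop) (by fun_prop)
  have h1 := Measure.prod_apply (μ := μ) (ν := volume.restrict (Ioi 0)) hS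
  have h2 := Measure.prod_apply_symm (μ := μ) (ν := volume.restrict (Ioi 0)) hS
  rw [h1] at h2
  simpa only [preimage_ofPred_eq, volume_section] using h2

end Line

section BorellBrascampLieb

variable {a b p : ℝ}

lemma mul_lintegral_add_le_lintegral_of_min_le (ha : 0 < a) (hb : 0 < b) {g f h : ℝ → ℝ≥0∞}
    (hg : Measurable g) (hf : Measurable f) (hh : Measurable h) (hsup : ⨆ x, g x = ⨆ x, f x)
    (hmin : ∀ x y, min (g x) (f y) ≤ h (a * x + b * y)) :
    ENNReal.ofReal a * (∫⁻ x, g x) + ENNReal.ofReal b * (∫⁻ x, f x) ≤ ∫⁻ x, h x := by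
  have measurable_tail (u : ℝ → ℝ≥0∞) :
      Measurable fun t : ℝ => volume {x | ENNReal.ofReal t < u x} :=
    Antitone.measurable fun s t hst =>
      measure_mono fun x hx => (ENNReal.ofReal_le_ofReal hst).trans_lt hx
  have measurableSet_tail {u : ℝ → ℝ≥0∞} (hu : Measurable u) (t : ℝ) :
      MeasurableSet {x | ENNReal.ofReal t < u x} := measurableSet_lt measurable_const hu
  have nonempty_tail {u : ℝ → ℝ≥0∞} {t : ℝ} (ht : ENNReal.ofReal t < ⨆ x, u x) {c : ℝ} :
      (c • {x | ENNReal.ofReal t < u x}).Nonempty := Nonempty.smul_set (lt_iSup_iff.1 ht)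
  have volume_smul {c : ℝ} (hc : 0 < c) (A : Set ℝ) :
      ENNReal.ofReal c * volume A = volume (c • A) := by
    rw [Measure.addHaar_smul_of_nonneg volume hc.le, finrank_self, pow_one]
  rw [lintegral_eq_lintegral_meas_ofReal_lt volume hg,
    lintegral_eq_lintegral_meas_ofReal_lt volume hf,
    lintegral_eq_lintegral_meas_ofReal_lt volume hh,
    ← lintegral_const_mul _ (measurable_tail g), ← lintegral_const_mul _ (measurable_tail f),
    ← lintegral_add_left ((measurable_tail g).const_mul _)]
  refine lintegral_mono fun t => ?_
  by_cases ht : ENNReal.ofReal t < ⨆ x, g x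
  · simp only [volume_smul ha, volume_smul hb]
    refine (volume_add_volume_le_volume_add ((measurableSet_tail hg t).const_smul₀ a)
      ((measurableSet_tail hf t).const_smul₀ b) (nonempty_tail ht)
      (nonempty_tail (hsup ▸ ht))).trans (measure_mono ?_)
    rintro _ ⟨_, ⟨x, hx, rfl⟩, _, ⟨y, hy, rfl⟩, rfl⟩
    exact (lt_min hx hy).trans_le (hmin x y)
  · have hg_tail : {x | ENNReal.ofReal t < g x} = ∅ :=
      eq_empty_of_forall_notMem fun x hx => ht (lt_iSup_iff.2 ⟨x, hx⟩)
    have hf_tail : {x | ENNReal.ofReal t < f x} = ∅ :=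
      eq_empty_of_forall_notMem fun x hx => ht (hsup ▸ lt_iSup_iff.2 ⟨x, hx⟩)
    simp [hg_tail, hf_tail]

lemma powerMean_mul_min_le (hp : p < 0) {u v x y : ℝ≥0∞} (hu : u ∈ Ioo 0 ⊤) (hv : v ∈ Ioo 0 ⊤)
    (hx : x ≤ u) :
    powerMean a b p u v * min (x / u) (y / v) ≤ powerMean a b p x y := by
  rcases eq_or_ne (min (x / u) (y / v)) 0 with hm | hm
  · simp [hm]
  have hm_top : min (x / u) (y / v) ≠ ⊤ :=
    ((min_le_left _ _).trans (ENNReal.div_le_of_le_mul (by rwa [one_mul]))).trans_lt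
      ENNReal.one_lt_top |>.ne
  rw [mul_comm, ← powerMean_mul hp.ne hm hm_top]
  refine powerMean_mono hp ?_ ?_
  · exact (ENNReal.le_div_iff_mul_le (.inl hu.1.ne') (.inl hu.2.ne)).1 (min_le_left _ _)
  · exact (ENNReal.le_div_iff_mul_le (.inl hv.1.ne') (.inl hv.2.ne)).1 (min_le_right _ _)

lemma powerMean_lintegral_le_of_iSup_ne_top (ha : 0 < a) (hb : 0 < b) (hp1 : -1 < p) (hp : p < 0)
    {g f h : ℝ → ℝ≥0∞} (hg : Measurable g) (hf : Measurable f) (hh : Measurable h)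
    (hg_top : ⨆ x, g x ≠ ⊤) (hf_top : ⨆ x, f x ≠ ⊤)
    (hle : ∀ x y, powerMean a b p (g x) (f y) ≤ h (a * x + b * y)) :
    powerMean a b (p / (1 + p)) (∫⁻ x, g x) (∫⁻ x, f x) ≤ ∫⁻ x, h x := by
  have hκ : p / (1 + p) < 0 := div_neg_of_neg_of_pos hp (by linarith)
  set u := ⨆ x, g x
  set v := ⨆ x, f x
  rcases eq_or_ne u 0 with hu0 | hu0
  · simp [ENNReal.iSup_eq_zero.1 hu0, powerMean_zero_left ha hκ]
  rcases eq_or_ne v 0 with hv0 | hv0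
  · simp [ENNReal.iSup_eq_zero.1 hv0, powerMean_zero_right hb hκ]
  have hu : u ∈ Ioo 0 ⊤ := ⟨pos_iff_ne_zero.2 hu0, hg_top.lt_top⟩
  have hv : v ∈ Ioo 0 ⊤ := ⟨pos_iff_ne_zero.2 hv0, hf_top.lt_top⟩
  set C := powerMean a b p u v
  have hC : C ∈ Ioo 0 ⊤ := powerMean_mem_Ioo ha hb hu hv
  have lintegral_div {c : ℝ≥0∞} {k : ℝ → ℝ≥0∞} (hk : Measurable k) :
      ∫⁻ x, k x / c = (∫⁻ x, k x) / c := by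
    simp only [div_eq_mul_inv, lintegral_mul_const _ hk]
  have hnormalized := mul_lintegral_add_le_lintegral_of_min_le ha hb (hg.div_const u)
    (hf.div_const v) (hh.div_const C)
    (by rw [← ENNReal.iSup_div, ← ENNReal.iSup_div, ENNReal.div_self hu0 hg_top,
      ENNReal.div_self hv0 hf_top])
    (fun x y => (ENNReal.le_div_iff_mul_le (.inl hC.1.ne') (.inl hC.2.ne)).2 <| by
      rw [mul_comm]
      exact (powerMean_mul_min_le hp hu hv (le_iSup g x)).trans (hle x y))
  rw [lintegral_div hg, lintegral_div hf, lintegral_div hh] at hnormalized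
  calc powerMean a b (p / (1 + p)) (∫⁻ x, g x) (∫⁻ x, f x)
      = powerMean a b (p / (1 + p)) (u * ((∫⁻ x, g x) / u)) (v * ((∫⁻ x, f x) / v)) := by
        rw [ENNReal.mul_div_cancel hu0 hg_top, ENNReal.mul_div_cancel hv0 hf_top]
    _ ≤ C * (ENNReal.ofReal a * ((∫⁻ x, g x) / u) + ENNReal.ofReal b * ((∫⁻ x, f x) / v)) :=
        powerMean_mul_le ha hb hp1 hp hu hv _ _
    _ ≤ C * ((∫⁻ x, h x) / C) := by gcongr
    _ = ∫⁻ x, h x := ENNReal.mul_div_cancel hC.1.ne' hC.2.ne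

lemma tendsto_lintegral_min_natCast {X : Type*} [MeasurableSpace X] {μ : Measure X}
    {u : X → ℝ≥0∞} (hu : AEMeasurable u μ) :
    Tendsto (fun N : ℕ => ∫⁻ x, min (u x) N ∂μ) atTop (𝓝 (∫⁻ x, u x ∂μ)) := by
  refine lintegral_tendsto_of_tendsto_of_monotone (fun N => hu.min aemeasurable_const)
    (ae_of_all _ fun x i j hij => min_le_min_left _ (Nat.cast_le.2 hij)) (ae_of_all _ fun x => ?_)
  simpa using (tendsto_const_nhds (x := u x)).min ENNReal.tendsto_nat_nhds_top

theorem powerMean_lintegral_real_le (ha : 0 < a) (hb : 0 < b) (hp1 : -1 < p) (hp : p < 0)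
    {g f h : ℝ → ℝ≥0∞} (hg : Measurable g) (hf : Measurable f) (hh : Measurable h)
    (hle : ∀ x y, powerMean a b p (g x) (f y) ≤ h (a * x + b * y)) :
    powerMean a b (p / (1 + p)) (∫⁻ x, g x) (∫⁻ x, f x) ≤ ∫⁻ x, h x := by
  have iSup_min_ne_top (u : ℝ → ℝ≥0∞) (N : ℕ) : ⨆ x, min (u x) N ≠ ⊤ :=
    ((iSup_le fun _ => min_le_right _ _).trans_lt (ENNReal.natCast_lt_top N)).ne
  refine le_of_tendsto (((continuous_powerMean a b (p / (1 + p))).tendsto _).comp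
    ((tendsto_lintegral_min_natCast hg.aemeasurable).prodMk_nhds
      (tendsto_lintegral_min_natCast hf.aemeasurable))) (Eventually.of_forall fun N => ?_)
  exact powerMean_lintegral_le_of_iSup_ne_top ha hb hp1 hp (hg.min measurable_const)
    (hf.min measurable_const) hh (iSup_min_ne_top g N) (iSup_min_ne_top f N) fun x y =>
      (powerMean_mono hp (min_le_left _ _) (min_le_left _ _)).trans (hle x y)

lemma measurable_finCons (n : ℕ) :
    Measurable fun q : ℝ × (Fin n → ℝ) => (Fin.cons q.1 q.2 : Fin (n + 1) → ℝ) :=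
  measurable_pi_lambda _ <| Fin.cases (by simpa using measurable_fst) fun i => by
    simpa using measurable_snd.eval

lemma lintegral_eq_lintegral_lintegral_finCons {n : ℕ} {u : (Fin (n + 1) → ℝ) → ℝ≥0∞}
    (hu : Measurable u) :
    ∫⁻ x, u x = ∫⁻ s : ℝ, ∫⁻ y : Fin n → ℝ, u (Fin.cons s y) := by
  have hmp := (volume_preserving_piFinSuccAbove (fun _ : Fin (n + 1) => ℝ) 0).symm
  rw [← hmp.lintegral_comp hu, Measure.volume_eq_prod,
    lintegral_prod (fun q => u ((MeasurableEquiv.piFinSuccAbove _ 0).symm q))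
      (hu.comp hmp.measurable).aemeasurable]
  simp [MeasurableEquiv.piFinSuccAbove, Fin.insertNthEquiv]

lemma powerMean_lintegral_pi_le (ha : 0 < a) (hb : 0 < b) {n : ℕ} (hp : p < 0)
    (hp1 : 0 < 1 + n * p) {g f h : (Fin n → ℝ) → ℝ≥0∞} (hg : Measurable g) (hf : Measurable f)
    (hh : Measurable h) (hle : ∀ x y, powerMean a b p (g x) (f y) ≤ h (a • x + b • y)) :
    powerMean a b (p / (1 + n * p)) (∫⁻ x, g x) (∫⁻ x, f x) ≤ ∫⁻ x, h x := by
  induction n with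
  | zero =>
    rw [Measure.volume_pi_eq_dirac 0]
    simpa using hle 0 0
  | succ n ih =>
    push_cast at hp1 ⊢
    have hp2 : 0 < 1 + n * p := by linarith
    have hq : p / (1 + n * p) < 0 := div_neg_of_neg_of_pos hp hp2
    have hq1 : -1 < p / (1 + n * p) := by rw [lt_div_iff₀ hp2]; linarith
    have hexp : p / (1 + (n + 1) * p) = p / (1 + n * p) / (1 + p / (1 + n * p)) := by
      rw [div_div, mul_add, mul_one, mul_div_cancel₀ _ hp2.ne']
      ring
    have measurable_slice_lintegral {u : (Fin (n + 1) → ℝ) → ℝ≥0∞} (hu : Measurable u) :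
        Measurable fun s : ℝ => ∫⁻ y : Fin n → ℝ, u (Fin.cons s y) :=
      (hu.comp (measurable_finCons n)).lintegral_prod_right'
    have measurable_slice {u : (Fin (n + 1) → ℝ) → ℝ≥0∞} (hu : Measurable u) (s : ℝ) :
        Measurable fun y : Fin n → ℝ => u (Fin.cons s y) :=
      hu.comp ((measurable_finCons n).comp measurable_prodMk_left)
    rw [lintegral_eq_lintegral_lintegral_finCons hg, lintegral_eq_lintegral_lintegral_finCons hf,
      lintegral_eq_lintegral_lintegral_finCons hh, hexp]
    refine powerMean_lintegral_real_le ha hb hq1 hq (measurable_slice_lintegral hg)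
      (measurable_slice_lintegral hf) (measurable_slice_lintegral hh) fun s t => ?_
    refine ih hp2 (measurable_slice hg s) (measurable_slice hf t)
      (measurable_slice hh (a * s + b * t)) fun x y => (hle _ _).trans_eq (congrArg h ?_)
    ext i
    cases i using Fin.cases <;> simp

theorem powerMean_lintegral_le {E : Type*} [NormedAddCommGroup E] [NormedSpace ℝ E]
    [FiniteDimensional ℝ E] [MeasurableSpace E] [BorelSpace E] (μ : Measure E) [μ.IsAddHaarMeasure]
    (ha : 0 < a) (hb : 0 < b) (hp : p < 0) (hp1 : 0 < 1 + finrank ℝ E * p) (g f : E → ℝ≥0∞)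
    {h : E → ℝ≥0∞} (hh : Measurable h)
    (hle : ∀ x y, powerMean a b p (g x) (f y) ≤ h (a • x + b • y)) :
    powerMean a b (p / (1 + finrank ℝ E * p)) (∫⁻ x, g x ∂μ) (∫⁻ x, f x ∂μ) ≤ ∫⁻ x, h x ∂μ := by
  obtain ⟨g', hg', hg'_le, hg'_eq⟩ := exists_measurable_le_lintegral_eq μ g
  obtain ⟨f', hf', hf'_le, hf'_eq⟩ := exists_measurable_le_lintegral_eq μ f
  rw [hg'_eq, hf'_eq]
  have e : E ≃L[ℝ] (Fin (finrank ℝ E) → ℝ) := .ofFinrankEq (by simp)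
  have : (μ.map e).IsAddHaarMeasure := e.isAddHaarMeasure_map μ
  set c := (μ.map e).addHaarScalarFactor volume
  have hc : (c : ℝ≥0∞) ≠ 0 :=
    ENNReal.coe_ne_zero.2 (Measure.addHaarScalarFactor_pos_of_isAddHaarMeasure _ _).ne'
  have lintegral_eq_mul {u : E → ℝ≥0∞} (hu : Measurable u) :
      ∫⁻ x, u x ∂μ = c * ∫⁻ y, u (e.symm y) := by
    have := lintegral_map (μ := μ) (hu.comp e.symm.continuous.measurable) e.continuous.measurable
    simp only [Function.comp_apply, e.symm_apply_apply] at this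
    rw [← this, Measure.isAddLeftInvariant_eq_smul (μ.map e) volume, lintegral_smul_measure]
    rfl
  have hexp : p / (1 + finrank ℝ E * p) ≠ 0 := (div_neg_of_neg_of_pos hp hp1).ne
  rw [lintegral_eq_mul hg', lintegral_eq_mul hf', lintegral_eq_mul hh,
    powerMean_mul hexp hc ENNReal.coe_ne_top]
  gcongr
  have measurable_symm := e.symm.continuous.measurable
  refine powerMean_lintegral_pi_le ha hb hp hp1 (hg'.comp measurable_symm)
    (hf'.comp measurable_symm) (hh.comp measurable_symm) fun x y => ?_
  simpa using (powerMean_mono hp (hg'_le _) (hf'_le _)).trans (hle (e.symm x) (e.symm y))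

end BorellBrascampLieb

section InfConv

variable {n : ℕ} {β ε : ℝ} {f : EuclideanSpace ℝ (Fin n) → ℝ}
  {φ ψ : EuclideanSpace ℝ (Fin n) → EReal}

/-- The strict epigraph `{(x, t) | φ x < t}`. Its convexity serves as the definition of convexity
for functions with values in `[-∞, ∞]`. -/
def strictEpigraph {E : Type*} (φ : E → EReal) : Set (E × ℝ) :=
  {q | φ q.1 < q.2}

lemma convex_strictEpigraph_coe_iff {E : Type*} [AddCommGroup E] [Module ℝ E] {r : E → ℝ} :
    Convex ℝ (strictEpigraph fun x => (r x : EReal)) ↔ ConvexOn ℝ univ r := by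
  simp only [strictEpigraph, EReal.coe_lt_coe_iff]
  constructor
  · refine fun hr => ⟨convex_univ, fun x _ y _ a b ha hb hab => ?_⟩
    refine le_of_forall_pos_lt_add fun δ hδ => ?_
    calc r (a • x + b • y)
        < a • (r x + δ) + b • (r y + δ) :=
          hr (x := (x, r x + δ)) (lt_add_of_pos_right _ hδ) (y := (y, r y + δ))
            (lt_add_of_pos_right _ hδ) ha hb hab
      _ = a • r x + b • r y + δ := by
          rw [smul_add, smul_add, add_add_add_comm, Convex.combo_self hab]
  · intro hr
    simpa using hr.convex_strict_epigraph

lemma convex_strictEpigraph_gaussBase : Convex ℝ (strictEpigraph (gaussBase n)) := by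
  refine convex_strictEpigraph_coe_iff.2 ?_
  simpa only [div_eq_inv_mul, smul_eq_mul, Pi.pow_apply] using
    (convexOn_univ_norm.pow (fun x _ => norm_nonneg x) 2).smul (inv_nonneg.2 zero_le_two)

lemma strictEpigraph_scaleBase (hε : 0 < ε) (φ : EuclideanSpace ℝ (Fin n) → EReal) :
    strictEpigraph (scaleBase ε φ) = ε • strictEpigraph φ := by
  ext ⟨x, t⟩
  rw [mem_smul_set_iff_inv_smul_mem₀ hε.ne']
  simp only [strictEpigraph, scaleBase, mem_ofPred_eq, Prod.smul_mk, smul_eq_mul]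
  rw [inv_mul_eq_div, EReal.coe_div, EReal.lt_div_iff (EReal.coe_pos.2 hε) (EReal.coe_ne_top ε),
    mul_comm]

lemma strictEpigraph_infConv (hφ : ∀ x, φ x ≠ ⊥) (hψ : ∀ x, ψ x ≠ ⊥) :
    strictEpigraph (infConv φ ψ) = strictEpigraph φ + strictEpigraph ψ := by
  ext ⟨x, t⟩
  simp only [strictEpigraph, infConv, mem_ofPred_eq, iInf_lt_iff, Set.mem_add, Prod.exists,
    Prod.mk_add_mk, Prod.mk.injEq]
  constructor
  · rintro ⟨y, hy⟩
    obtain ⟨hφ_top, hψ_top⟩ := (EReal.add_ne_top_iff_ne_top₂ (hφ y) (hψ (x - y))).1 hy.ne_top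
    obtain ⟨r, hr⟩ : ∃ r : ℝ, r = φ y := ⟨_, EReal.coe_toReal hφ_top (hφ y)⟩
    obtain ⟨s, hs⟩ : ∃ s : ℝ, s = ψ (x - y) := ⟨_, EReal.coe_toReal hψ_top (hψ _)⟩
    rw [← hr, ← hs] at hy
    norm_cast at hy
    refine ⟨y, (r + (t - s)) / 2, ?_, x - y, (s + (t - r)) / 2, ?_, add_sub_cancel y x, by ring⟩
    · rw [← hr, EReal.coe_lt_coe_iff]
      linarith
    · rw [← hs, EReal.coe_lt_coe_iff]
      linarith
  · rintro ⟨y, s, hs, z, t, ht, rfl, rfl⟩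
    refine ⟨y, ?_⟩
    rw [add_sub_cancel_left, EReal.coe_add]
    exact EReal.add_lt_add hs ht

lemma AlphaConcave.convexOn_rpow {α : ℝ} (hf : AlphaConcave n α f) (hα : α < 0)
    (hf0 : ∀ x, 0 ≤ f x) : ConvexOn ℝ {x | f x ≠ 0} fun x => f x ^ α := by
  refine ⟨hf.1, fun x hx y hy a b ha hb hab => ?_⟩
  obtain rfl : b = 1 - a := by linarith
  have hfx : 0 < f x ^ α := Real.rpow_pos_of_pos ((hf0 x).lt_of_ne' hx) α
  have hfy : 0 < f y ^ α := Real.rpow_pos_of_pos ((hf0 y).lt_of_ne' hy) α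
  have hmean : 0 < a * f x ^ α + (1 - a) * f y ^ α :=
    convex_Ioi (0 : ℝ) hfx hfy ha hb hab
  have := Real.rpow_le_rpow_of_nonpos (Real.rpow_pos_of_pos hmean _)
    (hf.2 x y hx hy a ha (by linarith)) hα.le
  rwa [← Real.rpow_mul hmean.le, one_div_mul_cancel hα.ne, Real.rpow_one] at this

lemma convex_strictEpigraph_convexBase (hβ : 0 < β) (hf0 : ∀ x, 0 ≤ f x)
    (hf : AlphaConcave n (-1 / β) f) : Convex ℝ (strictEpigraph (convexBase β f)) := by
  have hbase : ConvexOn ℝ {x | f x ≠ 0} fun x => β * (f x ^ (-1 / β) - 1) := by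
    have hpow := hf.convexOn_rpow (div_neg_of_neg_of_pos neg_one_lt_zero hβ) hf0
    simpa only [smul_eq_mul, Pi.add_apply, ← sub_eq_add_neg] using (hpow.add_const (-1)).smul hβ.le
  convert hbase.convex_strict_epigraph using 1
  ext ⟨x, t⟩
  by_cases hx : f x = 0
  · simp [strictEpigraph, convexBase, hx]
  · simp only [strictEpigraph, convexBase, mem_ofPred_eq, hx, if_false, EReal.coe_lt_coe_iff,
      ne_eq, not_false_eq_true, true_and]

lemma infConv_le_add (φ ψ : EuclideanSpace ℝ (Fin n) → EReal) (x y : EuclideanSpace ℝ (Fin n)) :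
    infConv φ ψ (x + y) ≤ φ x + ψ y :=
  (iInf_le _ x).trans_eq (by rw [add_sub_cancel_left])

lemma le_infConv {m : EReal} (hφ : ∀ x, 0 ≤ φ x) (hψ : ∀ x, m ≤ ψ x)
    (x : EuclideanSpace ℝ (Fin n)) : m ≤ infConv φ ψ x :=
  le_iInf fun y => (zero_add m).symm.trans_le (add_le_add (hφ y) (hψ _))

lemma le_scaleBase_convexBase (hβ : 0 < β) (hε : 0 < ε) (hf0 : ∀ x, 0 ≤ f x)
    (x : EuclideanSpace ℝ (Fin n)) :
    ((-(ε * β) : ℝ) : EReal) ≤ scaleBase ε (convexBase β f) x := by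
  by_cases hx : f (ε⁻¹ • x) = 0
  · simp [scaleBase, convexBase, hx, EReal.coe_mul_top_of_pos hε]
  · simp only [scaleBase, convexBase, hx, if_false]
    rw [← EReal.coe_mul, EReal.coe_le_coe_iff]
    have : 0 ≤ ε * β * f (ε⁻¹ • x) ^ (-1 / β) :=
      mul_nonneg (mul_pos hε hβ).le (Real.rpow_nonneg (hf0 _) _)
    linarith

lemma scaleBase_convexBase_smul (hε : 0 < ε) {x : EuclideanSpace ℝ (Fin n)} (hx : f x ≠ 0) :
    scaleBase ε (convexBase β f) (ε • x) =
      ((ε * (β * (f x ^ (-1 / β) - 1)) : ℝ) : EReal) := by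
  simp [scaleBase, convexBase, inv_smul_smul₀ hε.ne', hx]

lemma one_add_div_pos (hβ : 0 < β) {t : ℝ} (ht : -β < t) : 0 < 1 + t / β := by
  rw [← neg_lt_iff_pos_add', lt_div_iff₀ hβ]
  linarith

lemma le_ofBase (hβ : 0 < β) {x : EuclideanSpace ℝ (Fin n)} (hφ : ((-β : ℝ) : EReal) < φ x) {c : ℝ}
    (hc : φ x ≤ c) : (1 + c / β) ^ (-β) ≤ ofBase β φ x := by
  obtain ⟨t, ht⟩ : ∃ t : ℝ, φ x = t :=
    ⟨_, (EReal.coe_toReal (ne_top_of_le_ne_top (EReal.coe_ne_top c) hc) hφ.ne_bot).symm⟩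
  rw [ht, EReal.coe_lt_coe_iff] at hφ
  rw [ht, EReal.coe_le_coe_iff] at hc
  have hpos : 0 < 1 + t / β := one_add_div_pos hβ hφ
  simp only [ofBase, ht, EReal.coe_ne_top, if_false, EReal.toReal_coe]
  exact Real.rpow_le_rpow_of_nonpos hpos (by gcongr) (neg_nonpos.2 hβ.le)

lemma rpow_neg_rpow_neg_one_div (hβ : β ≠ 0) {x : ℝ} (hx : 0 ≤ x) :
    (x ^ (-β)) ^ (-1 / β) = x := by
  rw [← Real.rpow_mul hx, neg_mul_comm, neg_div, neg_neg, mul_one_div_cancel hβ, Real.rpow_one]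

lemma convexBase_ofBase (hβ : 0 < β) (hφ : ∀ x, ((-β : ℝ) : EReal) < φ x) :
    convexBase β (ofBase β φ) = φ := by
  funext x
  rcases eq_or_ne (φ x) ⊤ with hx | hx
  · simp [convexBase, ofBase, hx]
  obtain ⟨t, ht⟩ : ∃ t : ℝ, t = φ x := ⟨_, EReal.coe_toReal hx (hφ x).ne_bot⟩
  have hpos : 0 < 1 + t / β := one_add_div_pos hβ (EReal.coe_lt_coe_iff.1 (ht ▸ hφ x))
  simp only [convexBase, ofBase, ← ht, EReal.coe_ne_top, if_false, EReal.toReal_coe,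
    (Real.rpow_pos_of_pos hpos (-β)).ne']
  rw [rpow_neg_rpow_neg_one_div hβ.ne' hpos.le]
  congr 1
  field_simp
  ring

lemma ofBase_coe_mem_CAlpha (hβ : 0 < β) {r : EuclideanSpace ℝ (Fin n) → ℝ}
    (hr : ConvexOn ℝ univ r) (hr_gt : ∀ x, -β < r x) :
    ofBase β (fun x => (r x : EReal)) ∈ CAlpha n (-1 / β) := by
  have hpos (x) : 0 < 1 + r x / β := one_add_div_pos hβ (hr_gt x)
  have hofBase : ofBase β (fun x => (r x : EReal)) = fun x => (1 + r x / β) ^ (-β) := by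
    funext x
    simp [ofBase]
  have hne (x) : (1 + r x / β) ^ (-β) ≠ 0 := (Real.rpow_pos_of_pos (hpos x) _).ne'
  have hcont : Continuous fun x => (1 + r x / β) ^ (-β) :=
    ((hr.locallyLipschitz.continuous.div_const β).const_add 1).rpow_const
      fun x => .inl (hpos x).ne'
  rw [hofBase]
  refine ⟨fun x => (Real.rpow_pos_of_pos (hpos x) _).le, hcont.upperSemicontinuous, ⟨0, hne 0⟩,
    by simpa [hne] using convex_univ, fun x y _ _ l hl0 hl1 => ?_⟩
  rw [rpow_neg_rpow_neg_one_div hβ.ne' (hpos x).le, rpow_neg_rpow_neg_one_div hβ.ne' (hpos y).le,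
    one_div_div, div_neg, div_one]
  refine Real.rpow_le_rpow_of_nonpos (hpos _) ?_ (neg_nonpos.2 hβ.le)
  calc 1 + r (l • x + (1 - l) • y) / β
      ≤ 1 + (l * r x + (1 - l) * r y) / β := by
        gcongr
        exact hr.2 (mem_univ x) (mem_univ y) hl0 (sub_nonneg.2 hl1) (add_sub_cancel l 1)
    _ = l * (1 + r x / β) + (1 - l) * (1 + r y / β) := by ring

/-- The `α`-sum `G_α ⋆_α (ε ·_α f)` with `α = -1/β`, recovered from its convex base. -/
def gaussAlphaSum (β ε : ℝ) (f : EuclideanSpace ℝ (Fin n) → ℝ) : EuclideanSpace ℝ (Fin n) → ℝ :=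
  ofBase β (infConv (gaussBase n) (scaleBase ε (convexBase β f)))

lemma neg_lt_infConv_gaussBase (hβ : 0 < β) (hε0 : 0 < ε) (hε1 : ε < 1) (hf0 : ∀ x, 0 ≤ f x)
    (x : EuclideanSpace ℝ (Fin n)) :
    ((-β : ℝ) : EReal) < infConv (gaussBase n) (scaleBase ε (convexBase β f)) x := by
  have gaussBase_nonneg (y) : 0 ≤ gaussBase n y := EReal.coe_nonneg.2 (by positivity)
  have hεβ : -β < -(ε * β) := neg_lt_neg (mul_lt_of_lt_one_left hβ hε1)
  exact (EReal.coe_lt_coe_iff.2 hεβ).trans_le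
    (le_infConv gaussBase_nonneg (le_scaleBase_convexBase hβ hε0 hf0) x)

lemma convexBase_gaussAlphaSum (hβ : 0 < β) (hε0 : 0 < ε) (hε1 : ε < 1) (hf0 : ∀ x, 0 ≤ f x) :
    convexBase β (gaussAlphaSum β ε f) =
      infConv (gaussBase n) (scaleBase ε (convexBase β f)) :=
  convexBase_ofBase hβ (neg_lt_infConv_gaussBase hβ hε0 hε1 hf0)

lemma infConv_gaussBase_add_smul_le (hε0 : 0 < ε) (x : EuclideanSpace ℝ (Fin n))
    {y : EuclideanSpace ℝ (Fin n)} (hy : f y ≠ 0) :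
    infConv (gaussBase n) (scaleBase ε (convexBase β f)) (x + ε • y) ≤
      ((‖x‖ ^ 2 / 2 + ε * (β * (f y ^ (-1 / β) - 1)) : ℝ) : EReal) := by
  rw [EReal.coe_add, ← scaleBase_convexBase_smul hε0 hy]
  exact infConv_le_add _ _ _ _

lemma convex_strictEpigraph_infConv_gaussBase (hβ : 0 < β) (hε0 : 0 < ε) (hf0 : ∀ x, 0 ≤ f x)
    (hf : AlphaConcave n (-1 / β) f) :
    Convex ℝ (strictEpigraph (infConv (gaussBase n) (scaleBase ε (convexBase β f)))) := by
  have gaussBase_ne_bot (x) : gaussBase n x ≠ ⊥ := EReal.coe_ne_bot _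
  have scaleBase_ne_bot (x) : scaleBase ε (convexBase β f) x ≠ ⊥ :=
    ((EReal.bot_lt_coe _).trans_le (le_scaleBase_convexBase hβ hε0 hf0 x)).ne'
  rw [strictEpigraph_infConv gaussBase_ne_bot scaleBase_ne_bot, strictEpigraph_scaleBase hε0]
  exact convex_strictEpigraph_gaussBase.add ((convex_strictEpigraph_convexBase hβ hf0 hf).smul ε)

lemma infConv_gaussBase_ne_top (hε0 : 0 < ε) (hf_ne : ∃ x, f x ≠ 0)
    (x : EuclideanSpace ℝ (Fin n)) :
    infConv (gaussBase n) (scaleBase ε (convexBase β f)) x ≠ ⊤ := by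
  obtain ⟨y, hy⟩ := hf_ne
  have hle := infConv_gaussBase_add_smul_le (β := β) hε0 (x - ε • y) hy
  rw [sub_add_cancel] at hle
  exact ne_top_of_le_ne_top (EReal.coe_ne_top _) hle

lemma gaussAlphaSum_mem_CAlpha (hβ : 0 < β) (hε0 : 0 < ε) (hε1 : ε < 1) (hf0 : ∀ x, 0 ≤ f x)
    (hf : AlphaConcave n (-1 / β) f) (hf_ne : ∃ x, f x ≠ 0) :
    gaussAlphaSum β ε f ∈ CAlpha n (-1 / β) := by
  have hgt := neg_lt_infConv_gaussBase hβ hε0 hε1 hf0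
  have hconv := convex_strictEpigraph_infConv_gaussBase hβ hε0 hf0 hf
  obtain ⟨r, hr⟩ : ∃ r : EuclideanSpace ℝ (Fin n) → ℝ,
      infConv (gaussBase n) (scaleBase ε (convexBase β f)) = fun x => (r x : EReal) :=
    ⟨_, funext fun x =>
      (EReal.coe_toReal (infConv_gaussBase_ne_top hε0 hf_ne x) (hgt x).ne_bot).symm⟩
  rw [hr] at hgt hconv
  rw [gaussAlphaSum, hr]
  exact ofBase_coe_mem_CAlpha hβ (convex_strictEpigraph_coe_iff.1 hconv) fun x =>
    EReal.coe_lt_coe_iff.1 (hgt x)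

lemma powerMean_le_gaussAlphaSum (hβ : 0 < β) (hε0 : 0 < ε) (hε1 : ε < 1) (hf0 : ∀ x, 0 ≤ f x)
    (x y : EuclideanSpace ℝ (Fin n)) :
    powerMean (1 - ε) ε (-1 / β) (ENNReal.ofReal ((1 + ‖√(1 - ε) • x‖ ^ 2 / (2 * β)) ^ (-β)))
      (ENNReal.ofReal (f y)) ≤ ENNReal.ofReal (gaussAlphaSum β ε f ((1 - ε) • x + ε • y)) := by
  have hε : 0 < 1 - ε := sub_pos.2 hε1
  have hα : -1 / β < 0 := div_neg_of_neg_of_pos neg_one_lt_zero hβ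
  rcases (hf0 y).eq_or_lt with hy | hy
  · simp [← hy, powerMean_zero_right hε0 hα]
  have hG : 0 < 1 + ‖√(1 - ε) • x‖ ^ 2 / (2 * β) := by positivity
  rw [powerMean_ofReal hε hε0 (Real.rpow_pos_of_pos hG _) hy]
  refine ENNReal.ofReal_le_ofReal (le_of_eq_of_le ?_ (le_ofBase hβ
    (neg_lt_infConv_gaussBase hβ hε0 hε1 hf0 _)
    (infConv_gaussBase_add_smul_le hε0 ((1 - ε) • x) hy.ne')))
  rw [rpow_neg_rpow_neg_one_div hβ.ne' hG.le, one_div_div, div_neg, div_one, norm_smul, norm_smul,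
    mul_pow, mul_pow, Real.norm_of_nonneg (Real.sqrt_nonneg _), Real.sq_sqrt hε.le,
    Real.norm_of_nonneg hε.le]
  congr 1
  field_simp
  ring

end InfConv

section Integral

lemma integrable_one_add_norm_sq_div_rpow_neg {E : Type*} [NormedAddCommGroup E] [NormedSpace ℝ E]
    [FiniteDimensional ℝ E] [MeasurableSpace E] [BorelSpace E] (μ : Measure E) [μ.IsAddHaarMeasure]
    {β : ℝ} (hβ : finrank ℝ E < 2 * β) :
    Integrable (fun x : E => (1 + ‖x‖ ^ 2 / (2 * β)) ^ (-β)) μ := by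
  have hβ0 : 0 < 2 * β := (Nat.cast_nonneg _).trans_lt hβ
  convert (integrable_rpow_neg_one_add_norm_sq (μ := μ) hβ).comp_smul
    (inv_ne_zero (Real.sqrt_pos.2 hβ0).ne') using 3 with x
  · rw [norm_smul, mul_pow, norm_inv, inv_pow, Real.norm_of_nonneg (Real.sqrt_nonneg _),
      Real.sq_sqrt hβ0.le, inv_mul_eq_div]
  · ring

lemma integral_one_add_norm_sq_div_rpow_neg_pos {E : Type*} [NormedAddCommGroup E]
    [NormedSpace ℝ E] [FiniteDimensional ℝ E] [MeasurableSpace E] [BorelSpace E] (μ : Measure E)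
    [μ.IsAddHaarMeasure] {β : ℝ} (hβ : finrank ℝ E < 2 * β) :
    0 < ∫ x : E, (1 + ‖x‖ ^ 2 / (2 * β)) ^ (-β) ∂μ := by
  have hβ0 : 0 < 2 * β := (Nat.cast_nonneg _).trans_lt hβ
  have hpos (x : E) : 0 < (1 + ‖x‖ ^ 2 / (2 * β)) ^ (-β) := by positivity
  rw [integral_pos_iff_support_of_nonneg (fun x => (hpos x).le)
    (integrable_one_add_norm_sq_div_rpow_neg μ hβ), Function.support_eq_univ fun x => (hpos x).ne']
  exact isOpen_univ.measure_pos μ univ_nonempty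

lemma integral_comp_sqrt_smul {E F : Type*} [NormedAddCommGroup E] [NormedSpace ℝ E]
    [FiniteDimensional ℝ E] [MeasurableSpace E] [BorelSpace E] (μ : Measure E) [μ.IsAddHaarMeasure]
    [NormedAddCommGroup F] [NormedSpace ℝ F] (g : E → F) {c : ℝ} (hc : 0 ≤ c) :
    ∫ x, g (√c • x) ∂μ = c ^ (-(finrank ℝ E / 2 : ℝ)) • ∫ x, g x ∂μ := by
  rw [Measure.integral_comp_smul_of_nonneg μ g _ (hR := Real.sqrt_nonneg c), Real.sqrt_eq_rpow,
    ← Real.rpow_mul_natCast hc, ← Real.rpow_neg hc]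
  congr 2
  ring

lemma mul_rpow_neg_half_mul_rpow {c I : ℝ} (hc : 0 < c) (hI : 0 ≤ I) (d κ : ℝ) :
    c * (c ^ (-(d / 2)) * I) ^ κ = c ^ (1 - κ * d / 2) * I ^ κ := by
  rw [Real.mul_rpow (by positivity) hI, ← mul_assoc, ← Real.rpow_mul hc.le,
    show 1 - κ * d / 2 = 1 + -(d / 2) * κ by ring, Real.rpow_add hc, Real.rpow_one]

end Integral

section GaussAlphaSum

variable {n : ℕ} {β ε κ : ℝ} {f : EuclideanSpace ℝ (Fin n) → ℝ}

lemma powerMean_lintegral_le_lintegral_gaussAlphaSum (hβ : n < β) (hε0 : 0 < ε) (hε1 : ε < 1)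
    (hκ : κ = -1 / β / (1 + n * (-1 / β))) (hf0 : ∀ x, 0 ≤ f x)
    (hf : AlphaConcave n (-1 / β) f) (hf_ne : ∃ x, f x ≠ 0) :
    powerMean (1 - ε) ε κ
        (∫⁻ x : EuclideanSpace ℝ (Fin n),
          ENNReal.ofReal ((1 + ‖√(1 - ε) • x‖ ^ 2 / (2 * β)) ^ (-β)))
        (∫⁻ x, ENNReal.ofReal (f x)) ≤
      ∫⁻ x, ENNReal.ofReal (gaussAlphaSum β ε f x) := by
  have hβ0 : 0 < β := (Nat.cast_nonneg n).trans_lt hβ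
  have hα : -1 / β < 0 := div_neg_of_neg_of_pos neg_one_lt_zero hβ0
  have hnα : 0 < 1 + finrank ℝ (EuclideanSpace ℝ (Fin n)) * (-1 / β) := by
    have hnβ : (n : ℝ) / β < 1 := (div_lt_one hβ0).2 hβ
    rw [finrank_euclideanSpace_fin, neg_div, mul_neg, mul_one_div]
    linarith
  have hmeas : Measurable fun x => ENNReal.ofReal (gaussAlphaSum β ε f x) :=
    (gaussAlphaSum_mem_CAlpha hβ0 hε0 hε1 hf0 hf hf_ne).2.1.measurable.ennreal_ofReal
  have hle := powerMean_lintegral_le volume (sub_pos.2 hε1) hε0 hα hnα _ _ hmeas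
    (powerMean_le_gaussAlphaSum hβ0 hε0 hε1 hf0)
  rwa [finrank_euclideanSpace_fin, ← hκ] at hle

lemma ofReal_rpow_integral_le_lintegral_gaussAlphaSum (hβ : n < β) (hε0 : 0 < ε) (hε1 : ε < 1)
    (hκ : κ = -1 / β / (1 + n * (-1 / β))) (hf0 : ∀ x, 0 ≤ f x)
    (hf : AlphaConcave n (-1 / β) f) (hf_int : 0 < ∫ x, f x) :
    ENNReal.ofReal
        (((1 - ε) ^ (1 - κ * n / 2) *
            (∫ x : EuclideanSpace ℝ (Fin n), (1 + ‖x‖ ^ 2 / (2 * β)) ^ (-β)) ^ κ +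
          ε * (∫ x, f x) ^ κ) ^ (1 / κ)) ≤
      ∫⁻ x, ENNReal.ofReal (gaussAlphaSum β ε f x) := by
  set G : EuclideanSpace ℝ (Fin n) → ℝ := fun x => (1 + ‖x‖ ^ 2 / (2 * β)) ^ (-β)
  have hβ0 : 0 < β := (Nat.cast_nonneg n).trans_lt hβ
  have hε : 0 < 1 - ε := sub_pos.2 hε1
  have hnβ : finrank ℝ (EuclideanSpace ℝ (Fin n)) < 2 * β := by
    rw [finrank_euclideanSpace_fin]
    linarith
  have hG0 (x) : 0 ≤ G x := by positivity
  have hG_int : Integrable fun x => G (√(1 - ε) • x) :=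
    (integrable_one_add_norm_sq_div_rpow_neg volume hnβ).comp_smul (Real.sqrt_pos.2 hε).ne'
  have hG_pos : 0 < ∫ x, G x := integral_one_add_norm_sq_div_rpow_neg_pos volume hnβ
  have hle := powerMean_lintegral_le_lintegral_gaussAlphaSum hβ hε0 hε1 hκ hf0 hf
    (exists_ne_zero_of_integral_ne_zero hf_int.ne')
  rwa [← ofReal_integral_eq_lintegral_ofReal hG_int (.of_forall fun x => hG0 _),
    ← ofReal_integral_eq_lintegral_ofReal (.of_integral_ne_zero hf_int.ne') (.of_forall hf0),
    integral_comp_sqrt_smul volume G hε.le, finrank_euclideanSpace_fin, smul_eq_mul,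
    powerMean_ofReal hε hε0 (by positivity) hf_int, mul_rpow_neg_half_mul_rpow hε hG_pos.le] at hle

end GaussAlphaSum

theorem stmt_15_general {n : ℕ} (α β κ : ℝ) (hnα : 0 < 1 + n * α) (hα : α < 0)
    (hβ : β = -1 / α) (hκ : κ = α / (1 + n * α))
    (f : EuclideanSpace ℝ (Fin n) → ℝ) (hf0 : ∀ x, 0 ≤ f x) (hf : AlphaConcave n α f)
    (hf_int : 0 < ∫ x, f x) (ε : ℝ) (hε0 : 0 < ε) (hε1 : ε < 1) :
    ∃ h : EuclideanSpace ℝ (Fin n) → ℝ, h ∈ CAlpha n α ∧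
      (∀ x, convexBase β h x = infConv (gaussBase n) (scaleBase ε (convexBase β f)) x) ∧
      ENNReal.ofReal
          (((1 - ε) ^ (1 - κ * n / 2) *
              (∫ x : EuclideanSpace ℝ (Fin n), (1 + ‖x‖ ^ 2 / (2 * β)) ^ (-β)) ^ κ +
            ε * (∫ x, f x) ^ κ) ^ (1 / κ)) ≤
        ∫⁻ x, ENNReal.ofReal (h x) := by
  have hnβ : n < β := by
    rw [hβ, lt_div_iff_of_neg hα]
    linarith
  obtain rfl : α = -1 / β := by
    rw [hβ, div_div_cancel₀ (by norm_num)]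
  have hβ0 : 0 < β := (Nat.cast_nonneg n).trans_lt hnβ
  exact ⟨gaussAlphaSum β ε f, gaussAlphaSum_mem_CAlpha hβ0 hε0 hε1 hf0 hf
    (exists_ne_zero_of_integral_ne_zero hf_int.ne'),
    congrFun (convexBase_gaussAlphaSum hβ0 hε0 hε1 hf0),
    ofReal_rpow_integral_le_lintegral_gaussAlphaSum hnβ hε0 hε1 hκ hf0 hf hf_int⟩

theorem stmt_15 {n : ℕ} (hn : 1 ≤ n) (α β κ : ℝ) (hα1 : -1 / (n : ℝ) < α) (hα2 : α < 0)
    (hβ : β = -1 / α) (hκ : κ = α / (1 + n * α))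
    (f : EuclideanSpace ℝ (Fin n) → ℝ) (hf : f ∈ CAlpha n α)
    (hfi : Integrable f) (hf0 : 0 < ∫ x, f x)
    (ε : ℝ) (hε0 : 0 < ε) (hε1 : ε < 1) :
    ∃ h : EuclideanSpace ℝ (Fin n) → ℝ, h ∈ CAlpha n α ∧
      (∀ x, convexBase β h x = infConv (gaussBase n) (scaleBase ε (convexBase β f)) x) ∧
      ENNReal.ofReal
          (((1 - ε) ^ (1 - κ * n / 2) *
              (∫ x : EuclideanSpace ℝ (Fin n), (1 + ‖x‖ ^ 2 / (2 * β)) ^ (-β)) ^ κ +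
            ε * (∫ x, f x) ^ κ) ^ (1 / κ)) ≤
        ∫⁻ x, ENNReal.ofReal (h x) := by
  have hnα : 0 < 1 + n * α := by rwa [div_lt_iff₀' (by positivity), neg_lt_iff_pos_add'] at hα1
  exact stmt_15_general α β κ hnα hα2 hβ hκ f hf.1 hf.2.2.2 hf0 ε hε0 hε1
end
end
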